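/- arXiv:2501.06996 — 6 statements merged into one kernel-verified Lean document; each statement's English description precedes it below -/
import Mathlib

section
/- Let E be a real normed vector space and let C ⊆ E be a convex, topologically open set. If W ⊆ C is nonempty and is a wall of C (for all a, b ∈ C and all r ∈ ℝ with 0 < r < 1: (1-r)•a + r•b ∈ W ⟺ a ∈ W and b ∈ W), then W = C. In other words, open convex sets are algebraically open: they have no proper nonempty walls. -/
/-- A topologically open convex subset `C` of a real normed space is
algebraically open: its only nonempty wall is `C` itself. -/
theorem open_convex_has_no_proper_wall
    (E : Type*) [NormedAddCommGroup E] [NormedSpace ℝ E]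
    (C W : Set E) (hC : Convex ℝ C) (hCopen : IsOpen C)
    (hWC : W ⊆ C) (hW : W.Nonempty)
    (hwall : ∀ a ∈ C, ∀ b ∈ C, ∀ r : ℝ, 0 < r → r < 1 →
        ((1 - r) • a + r • b ∈ W ↔ a ∈ W ∧ b ∈ W)) :
    W = C := by
  refine hWC.antisymm fun x hx => ?_
  obtain ⟨w, hw⟩ := hW
  -- Since `C` is open, the segment from `x` to `w` extends slightly beyond `w` inside `C`.
  obtain ⟨t, htC, ht⟩ : ∃ t : ℝ, w + t • (w - x) ∈ C ∧ 0 < t := by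
    have hcont : Continuous fun t : ℝ => w + t • (w - x) := by fun_prop
    have hnear : ∀ᶠ t in nhds (0 : ℝ), w + t • (w - x) ∈ C :=
      (hCopen.preimage hcont).mem_nhds (by simpa using hWC hw)
    have hright : ∀ᶠ t in nhdsWithin (0 : ℝ) (Set.Ioi 0), w + t • (w - x) ∈ C :=
      hnear.filter_mono nhdsWithin_le_nhds
    exact (hright.and self_mem_nhdsWithin).exists
  -- So `w` is a proper weighted mean of `x` and a point of `C`, and the wall property gives `x ∈ W`.
  have hmean : (1 - t / (1 + t)) • (w + t • (w - x)) + (t / (1 + t)) • x = w := by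
    match_scalars <;> field_simp <;> ring
  refine ((hwall _ htC x hx (t / (1 + t)) (by positivity) ?_).1 (by rwa [hmean])).2
  rw [div_lt_one (by positivity)]
  linarith
end

section
/- For p ∈ ℝ define the operation m_p on WithTop ℝ (the extended real line ℝ ∪ {∞}) by m_p(x, y) = (1-p)·x + p·y when x, y are real, and m_p(x, y) = ⊤ whenever x = ⊤ or y = ⊤. Then for all p, r ∈ ℝ with 0 < p < 1 and 0 < r < 1 and all x, y, z ∈ WithTop ℝ: (i) m_p(x, x) = x; (ii) m_p(x, y) = m_{1-p}(y, x); (iii) m_p(m_r(x, y), z) = m_{r∘p}(x, m_{p/(r∘p)}(y, z)), where r∘p = r + p - r·p. -/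
/-!
If some argument is `⊤`, both sides of each identity are `⊤`, since `⊤` is absorbing. On real
arguments the identities are polynomial, after clearing the denominator `r + p - r * p`,
which is positive; both sides of skew-associativity equal
`(1 - p) * (1 - r) * x + (1 - p) * r * y + p * z`.
-/

/-- The weighted mean operation on the extended real line `WithTop ℝ`:
`(1-p)·x + p·y` for real arguments, and `⊤` whenever an argument is `⊤`. -/
def extMean (p : ℝ) (x y : WithTop ℝ) : WithTop ℝ :=
  match x, y with
  | (a : ℝ), (b : ℝ) => ((1 - p) * a + p * b : ℝ)
  | _, _ => ⊤

theorem extMean_coe (p a b : ℝ) :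
    extMean p (a : WithTop ℝ) (b : WithTop ℝ) = (((1 - p) * a + p * b : ℝ) : WithTop ℝ) := rfl

theorem extMean_top_left (p : ℝ) (y : WithTop ℝ) : extMean p ⊤ y = ⊤ := rfl

theorem extMean_top_right (p : ℝ) (x : WithTop ℝ) : extMean p x ⊤ = ⊤ := by
  cases x <;> rfl

/-- The extended real line with the absorbing weighted mean operations
satisfies idempotence, skew-commutativity and skew-associativity, the defining
identities of barycentric algebras. -/
theorem extMean_barycentric
    (p r : ℝ) (hp0 : 0 < p) (hp1 : p < 1) (hr0 : 0 < r) (hr1 : r < 1)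
    (x y z : WithTop ℝ) :
    extMean p x x = x ∧
    extMean p x y = extMean (1 - p) y x ∧
    extMean p (extMean r x y) z
      = extMean (r + p - r * p) x (extMean (p / (r + p - r * p)) y z) := by
  -- `r + p - r * p = r * (1 - p) + p`, so the division in the inner weight is genuine.
  have hq : r + p - r * p ≠ 0 := by nlinarith [mul_pos hr0 (sub_pos.mpr hp1)]
  refine ⟨?_, ?_, ?_⟩
  · cases x with
    | top => rfl
    | coe a => rw [extMean_coe, WithTop.coe_inj]; ring
  · cases x with
    | top => rw [extMean_top_left, extMean_top_right]
    | coe a =>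
      cases y with
      | top => rw [extMean_top_left, extMean_top_right]
      | coe b => rw [extMean_coe, extMean_coe, WithTop.coe_inj]; ring
  · cases x with
    | top => simp only [extMean_top_left]
    | coe a =>
      cases y with
      | top => simp only [extMean_top_left, extMean_top_right]
      | coe b =>
        cases z with
        | top => simp only [extMean_top_right]
        | coe c =>
          simp only [extMean_coe, WithTop.coe_inj]
          linear_combination (b - c) * mul_div_cancel₀ p hq
end

section
/- Let K be a field, V a vector space over K, U₁ and U₂ submodules of V, x, y ∈ V, and k ∈ K with k ≠ 0 and k ≠ 1. Then {(1-k)•a + k•b : a ∈ x + U₁, b ∈ y + U₂} = ((1-k)•x + k•y) + (U₁ ⊔ U₂), where x + U denotes the coset {x + u : u ∈ U} and U₁ ⊔ U₂ is the submodule {u₁ + u₂ : u₁ ∈ U₁, u₂ ∈ U₂}. -/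
open Pointwise

/-- Applying the weighted mean operation `k̲(a,b) = (1-k)•a + k•b`, for
`k ≠ 0, 1`, elementwise to two cosets `x + U₁` and `y + U₂` of submodules
yields the coset `((1-k)•x + k•y) + (U₁ ⊔ U₂)`. -/
theorem weighted_mean_of_cosets
    (K : Type*) [Field K] (V : Type*) [AddCommGroup V] [Module K V]
    (U₁ U₂ : Submodule K V) (x y : V) (k : K) (hk0 : k ≠ 0) (hk1 : k ≠ 1) :
    Set.image2 (fun a b => (1 - k) • a + k • b)
        (x +ᵥ (U₁ : Set V)) (y +ᵥ (U₂ : Set V))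
      = ((1 - k) • x + k • y) +ᵥ ((U₁ ⊔ U₂ : Submodule K V) : Set V) := by
  have hk1' : 1 - k ≠ 0 := sub_ne_zero.mpr hk1.symm
  ext z
  simp only [Set.mem_image2, Set.mem_vadd_set, SetLike.mem_coe, vadd_eq_add]
  constructor
  · rintro ⟨_, ⟨u, hu, rfl⟩, _, ⟨v, hv, rfl⟩, rfl⟩
    refine ⟨(1 - k) • u + k • v,
      Submodule.add_mem_sup (U₁.smul_mem _ hu) (U₂.smul_mem _ hv), ?_⟩
    rw [smul_add, smul_add, add_add_add_comm]
  · rintro ⟨w, hw, rfl⟩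
    obtain ⟨u, hu, v, hv, rfl⟩ := Submodule.mem_sup.mp hw
    -- Both weights are units, so they can be divided out of the two summands of `w`.
    refine ⟨_, ⟨(1 - k)⁻¹ • u, U₁.smul_mem _ hu, rfl⟩, _, ⟨k⁻¹ • v, U₂.smul_mem _ hv, rfl⟩, ?_⟩
    rw [smul_add, smul_add, smul_inv_smul₀ hk1', smul_inv_smul₀ hk0, add_add_add_comm]
end

section
/- Let K be a field, V a vector space over K, s₁ and s₂ nonempty affine subspaces of V, and k ∈ K with k ≠ 0 and k ≠ 1. Then the set T = {(1-k)•a + k•b : a ∈ s₁, b ∈ s₂} is the carrier of an affine subspace of V whose direction is s₁.direction ⊔ s₂.direction. -/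
/-! Fix `p ∈ s₁` and `q ∈ s₂`. The weighted means of points of `s₁` and `s₂` are the translate of
`(1 - k) • s₁.direction + k • s₂.direction` by the weighted mean of `p` and `q`, and since `1 - k`
and `k` are invertible, this sum is `s₁.direction ⊔ s₂.direction`. -/

/-- Applying the weighted mean operation `k̲(a,b) = (1-k)•a + k•b`, for
`k ≠ 0, 1`, elementwise to two nonempty affine subspaces `s₁, s₂` of a vector
space yields (the carrier of) an affine subspace whose direction is
`s₁.direction ⊔ s₂.direction`. -/
theorem weighted_mean_of_affineSubspaces
    (K : Type*) [Field K] (V : Type*) [AddCommGroup V] [Module K V]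
    (s₁ s₂ : AffineSubspace K V)
    (h₁ : (s₁ : Set V).Nonempty) (h₂ : (s₂ : Set V).Nonempty)
    (k : K) (hk0 : k ≠ 0) (hk1 : k ≠ 1) :
    ∃ A : AffineSubspace K V,
      (A : Set V)
          = Set.image2 (fun a b => (1 - k) • a + k • b) (s₁ : Set V) (s₂ : Set V) ∧
        A.direction = s₁.direction ⊔ s₂.direction := by
  obtain ⟨p, hp⟩ := h₁
  obtain ⟨q, hq⟩ := h₂
  have hk1' : 1 - k ≠ 0 := sub_ne_zero.mpr hk1.symm
  refine ⟨AffineSubspace.mk' ((1 - k) • p + k • q) (s₁.direction ⊔ s₂.direction), ?_,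
    AffineSubspace.direction_mk' _ _⟩
  ext x
  rw [SetLike.mem_coe, AffineSubspace.mem_mk', vsub_eq_sub, Submodule.mem_sup, Set.mem_image2]
  constructor
  · rintro ⟨u, hu, v, hv, huv⟩
    -- As `1 - k` and `k` are invertible, moving `p` by `(1 - k)⁻¹ • u` and `q` by `k⁻¹ • v`
    -- moves their weighted mean by `u + v`.
    refine ⟨(1 - k)⁻¹ • u +ᵥ p,
      AffineSubspace.vadd_mem_of_mem_direction (Submodule.smul_mem _ _ hu) hp,
      k⁻¹ • v +ᵥ q,
      AffineSubspace.vadd_mem_of_mem_direction (Submodule.smul_mem _ _ hv) hq, ?_⟩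
    simp only [vadd_eq_add, smul_add, smul_inv_smul₀ hk1', smul_inv_smul₀ hk0]
    rw [← sub_add_cancel x ((1 - k) • p + k • q), ← huv]
    abel
  · rintro ⟨a, ha, b, hb, rfl⟩
    refine ⟨(1 - k) • (a - p),
      Submodule.smul_mem _ _ (AffineSubspace.vsub_mem_direction ha hp),
      k • (b - q), Submodule.smul_mem _ _ (AffineSubspace.vsub_mem_direction hb hq), ?_⟩
    simp only [smul_sub]
    abel
end

section
/- Let V be a vector space over ℚ, let S be a join semilattice, and let h : V → S be a map such that for every rational p with 0 < p < 1 and all x, y ∈ V, h((1-p)•x + p•y) = h(x) ⊔ h(y). Then h is constant: h(x) = h(y) for all x, y ∈ V. -/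
/-- A map from a rational vector space to a join semilattice turning every
weighted mean with weight in the open rational unit interval into a join is
constant: the barycentric reduct of an affine space over `ℚ` has no nontrivial
semilattice quotients. -/
theorem semilattice_quotient_of_rational_space_trivial
    (V : Type*) [AddCommGroup V] [Module ℚ V]
    (S : Type*) [SemilatticeSup S] (h : V → S)
    (hhom : ∀ p : ℚ, 0 < p → p < 1 →
        ∀ x y : V, h ((1 - p) • x + p • y) = h x ⊔ h y) :
    ∀ x y : V, h x = h y := by
  -- `x` is the midpoint of `y` and its reflection `2 • x - y`, so `h y` lies below `h x`.
  have key : ∀ x y : V, h y ≤ h x := by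
    intro x y
    have hm := hhom (1 / 2) (by norm_num) (by norm_num) y ((2 : ℚ) • x - y)
    have hx : (1 - 1 / 2 : ℚ) • y + (1 / 2 : ℚ) • ((2 : ℚ) • x - y) = x := by module
    rw [hx] at hm
    exact hm ▸ le_sup_left
  exact fun x y => le_antisymm (key y x) (key x y)
end

section
/- Let V be a vector space over ℝ, let A ⊆ V be a finite set, and let C = convexHull ℝ A. If F ⊆ C is convex and is an extreme subset of C (IsExtreme ℝ C F), then F = convexHull ℝ (A ∩ F). -/
/-!
Split `A` into `A ∩ F` and `A \ F`. As `F` is extreme in `C = convexHull ℝ A`, the complement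
`C \ F` is convex, so it contains the hull of `A \ F`. Every point `x` of `F` lies on a segment
`[p, q]` with `p` in the hull of `A ∩ F` and `q` in the hull of `A \ F`, hence `q ∉ F`. Extremality
forbids `x` from lying in the open segment, and `x ≠ q`, so `x = p`.
-/

/-- Every convex extreme subset `F` of a convex polytope `C = convexHull ℝ A`
(`A` finite) is the convex hull of the vertices of the polytope it contains:
`F = convexHull ℝ (A ∩ F)`. -/
theorem extreme_subset_of_polytope_eq_hull_of_vertices
    (V : Type*) [AddCommGroup V] [Module ℝ V]
    (A : Set V) (hA : A.Finite) (F : Set V)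
    (hF : Convex ℝ F) (hext : IsExtreme ℝ (convexHull ℝ A) F) :
    F = convexHull ℝ (A ∩ F) := by
  refine Set.Subset.antisymm (fun x hx => ?_) (convexHull_min Set.inter_subset_right hF)
  have hdiff : convexHull ℝ (A \ F) ⊆ convexHull ℝ A \ F :=
    convexHull_min (Set.sdiff_subset_sdiff_left (subset_convexHull ℝ A))
      (hext.convex_sdiff (convex_convexHull ℝ A))
  have hxA : x ∈ convexHull ℝ (A ∩ F ∪ A \ F) := by
    rw [Set.inter_union_sdiff]
    exact hext.subset hx
  -- `convexHull_union` requires both parts to be nonempty.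
  rcases (A ∩ F).eq_empty_or_nonempty with h₁ | h₁
  · rw [h₁, Set.empty_union] at hxA
    exact absurd hx (hdiff hxA).2
  rcases (A \ F).eq_empty_or_nonempty with h₂ | h₂
  · rwa [h₂, Set.union_empty] at hxA
  rw [convexHull_union h₁ h₂, mem_convexJoin] at hxA
  obtain ⟨p, hp, q, hq, hpq⟩ := hxA
  have hpC : p ∈ convexHull ℝ A := convexHull_mono Set.inter_subset_left hp
  have hqC := hdiff hq
  by_cases hxp : p = x
  · exact hxp ▸ hp
  have hxq : q ≠ x := fun h => hqC.2 (h ▸ hx)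
  exact absurd (hext.right_mem_of_mem_openSegment hpC hqC.1 hx
    (mem_openSegment_of_ne_left_right hxp hxq hpq)) hqC.2
end
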